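/- Let R be a commutative ring, m ≥ 0 and n ≥ 1. For all A₁,…,A_{2n} ∈ M_n E^m, every entry of the matrix s_{2n}(A₁,…,A_{2n}) lies in E^m_{≥2} = ⨁_{i=2}^m E^m_i, the sum of the homogeneous components of degree at least 2 of the Grassmann algebra. -/

import Mathlib

/-!
Killing every product of two generators maps the Grassmann algebra onto the trivial square-zero
extension of the base ring, which is commutative, and the kernel of this map consists of the
elements of degree at least `2`. The theorem is thus the Amitsur–Levitzki identity `s_{2n} = 0`
over a commutative ring.

That identity follows Rosset. Identities with integer coefficients can be checked over
`ℚ`-algebras. There, put `X = ∑ Aᵢ vᵢ` with anticommuting `vᵢ`, so that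
`X ^ k = s_k(A₁, …, A_k) v₁ ⋯ v_k`. The entries of `X ^ 2` are even, hence central, and matrices
with odd entries satisfy `tr (Y Z) = -tr (Z Y)`, so the trace of every positive power of `X ^ 2`
vanishes. In characteristic zero this forces the characteristic polynomial of `X ^ 2` to be `t ^ n`,
and `X ^ (2n) = (X ^ 2) ^ n = 0` by the Cayley–Hamilton theorem.
-/

section CharpolyOfTracelessPowers

open Polynomial

variable {R n : Type*} [CommRing R] [Fintype n] [DecidableEq n]

theorem derivative_det_eq_trace_adjugate_mul (M : Matrix n n R[X]) :
    derivative M.det = (M.adjugate * M.map derivative).trace := by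
  have diag_eq (i : n) : (M.adjugate * M.map derivative) i i =
      (M.updateCol i fun j => derivative (M j i)).det := by
    rw [← Matrix.cramer_apply, Matrix.cramer_eq_adjugate_mulVec]
    rfl
  simp only [Matrix.trace, Matrix.diag_apply, diag_eq, Matrix.det_apply, map_sum]
  rw [Finset.sum_comm]
  refine Finset.sum_congr rfl fun σ _ => ?_
  rw [← Finset.smul_sum, Units.smul_def, Units.smul_def, derivative_smul, derivative_prod_finset]
  congr 1
  refine Finset.sum_congr rfl fun i _ => ?_
  rw [← Finset.mul_prod_erase _ _ (Finset.mem_univ i), mul_comm, Matrix.updateCol_self]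
  congr 1
  exact Finset.prod_congr rfl fun j hj => by rw [Matrix.updateCol_ne (Finset.ne_of_mem_erase hj)]

theorem derivative_charpolyRev_eq_neg_trace (B : Matrix n n R) :
    derivative B.charpolyRev =
      -((1 - (X : R[X]) • B.map C).adjugate * B.map C).trace := by
  have derivative_pencil : (1 - (X : R[X]) • B.map C).map derivative = -B.map C := by
    ext1 i j
    by_cases h : i = j <;> simp [h, derivative_mul]
  rw [Matrix.charpolyRev, derivative_det_eq_trace_adjugate_mul, derivative_pencil, mul_neg,
    Matrix.trace_neg]

theorem trace_adjugate_one_sub_smul_mul (x : R) (D P : Matrix n n R) :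
    ((1 - x • D).adjugate * P).trace =
      (1 - x • D).det * P.trace + x * ((1 - x • D).adjugate * (D * P)).trace := by
  set N := 1 - x • D with hN
  have expand : N.adjugate * P = N.det • P + x • (N.adjugate * (D * P)) := by
    calc N.adjugate * P = N.adjugate * (N + x • D) * P := by rw [hN, sub_add_cancel, mul_one]
      _ = N.det • P + x • (N.adjugate * (D * P)) := by
        rw [mul_add, Matrix.adjugate_mul, add_mul, Matrix.smul_mul, one_mul, Matrix.mul_smul,
          Matrix.smul_mul, mul_assoc]
  rw [expand, Matrix.trace_add, Matrix.trace_smul, Matrix.trace_smul, smul_eq_mul, smul_eq_mul]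

theorem derivative_charpolyRev_eq_zero_of_trace_pow_eq_zero {B : Matrix n n R}
    (hB : ∀ k, (B ^ (k + 1)).trace = 0) : derivative B.charpolyRev = 0 := by
  have trace_pow (k : ℕ) : ((B.map (C : R →+* R[X])) ^ (k + 1)).trace = 0 := by
    rw [← Matrix.map_pow, ← AddMonoidHom.map_trace, hB, map_zero]
  set D : Matrix n n R[X] := B.map C
  let t (k : ℕ) : R[X] := ((1 - (X : R[X]) • D).adjugate * D ^ (k + 1)).trace
  have t_eq (k : ℕ) : t 0 = X ^ k * t k := by
    induction k with
    | zero => rw [pow_zero, one_mul]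
    | succ k ih =>
      have t_succ : t k = X * t (k + 1) := by
        simp only [t]
        rw [trace_adjugate_one_sub_smul_mul, trace_pow, mul_zero, zero_add, ← pow_succ']
      rw [ih, t_succ, pow_succ, mul_assoc]
  have t_zero : t 0 = 0 := by
    ext d
    rw [coeff_zero, X_pow_dvd_iff.1 ⟨t (d + 1), t_eq (d + 1)⟩ d d.lt_succ_self]
  have t_zero_eq : t 0 = ((1 - (X : R[X]) • D).adjugate * D).trace := by
    simp only [t, zero_add, pow_one]
  rw [derivative_charpolyRev_eq_neg_trace, ← t_zero_eq, t_zero, neg_zero]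

theorem matrix_pow_card_eq_zero_of_trace_pow_eq_zero [IsAddTorsionFree R] {B : Matrix n n R}
    (hB : ∀ k, (B ^ (k + 1)).trace = 0) : B ^ Fintype.card n = 0 := by
  nontriviality R
  have charpolyRev_eq : B.charpolyRev = 1 := by
    rw [eq_C_of_derivative_eq_zero (derivative_charpolyRev_eq_zero_of_trace_pow_eq_zero hB),
      coeff_zero_eq_eval_zero, B.eval_charpolyRev, C_1]
  have charpoly_eq : B.charpoly = X ^ Fintype.card n := by
    have h := B.reverse_charpoly
    rw [charpolyRev_eq, reverse, B.charpoly_natDegree_eq_dim] at h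
    rw [← reflect_reflect (N := Fintype.card n) (p := B.charpoly), h, reflect_one]
  simpa [charpoly_eq] using B.aeval_self_charpoly

theorem matrix_pow_card_eq_zero_of_apply_mem_center {S : Type*} [Ring S] [IsAddTorsionFree S]
    {Y : Matrix n n S} (hY : ∀ i j, Y i j ∈ Subring.center S)
    (htrace : ∀ k, (Y ^ (k + 1)).trace = 0) : Y ^ Fintype.card n = 0 := by
  let Z := Subring.center S
  have : IsAddTorsionFree Z :=
    Function.Injective.isAddTorsionFree Z.subtype.toAddMonoidHom Subtype.val_injective
  let B : Matrix n n Z := .of fun i j => ⟨Y i j, hY i j⟩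
  have map_pow_B (k : ℕ) : (B ^ k).map Z.subtype = Y ^ k := Matrix.map_pow B Z.subtype k
  have trace_pow_B (k : ℕ) : (B ^ (k + 1)).trace = 0 := by
    apply Subtype.val_injective
    exact (AddMonoidHom.map_trace Z.subtype _).trans
      ((congrArg Matrix.trace (map_pow_B _)).trans (htrace k))
  rw [← map_pow_B, matrix_pow_card_eq_zero_of_trace_pow_eq_zero trace_pow_B,
    Matrix.map_zero _ (map_zero _)]

end CharpolyOfTracelessPowers

theorem matrix_pow_apply_mem_graded {ι n S σ : Type*} [AddMonoid ι] [Semiring S] [SetLike σ S]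
    [AddSubmonoidClass σ S] (𝒜 : ι → σ) [SetLike.GradedMonoid 𝒜] [Fintype n] [DecidableEq n]
    {d : ι} {X : Matrix n n S} (hX : ∀ i j, X i j ∈ 𝒜 d) (k : ℕ) (i j : n) :
    (X ^ k) i j ∈ 𝒜 (k • d) := by
  induction k generalizing i j with
  | zero =>
    rw [pow_zero, zero_nsmul, Matrix.one_apply]
    split_ifs
    · exact SetLike.GradedOne.one_mem
    · exact zero_mem _
  | succ k ih =>
    rw [pow_succ, Matrix.mul_apply, succ_nsmul]
    exact sum_mem fun l _ => SetLike.GradedMul.mul_mem (ih i l) (hX l j)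

theorem trace_mul_eq_neg_of_anticommute {m n S : Type*} [Fintype m] [Fintype n]
    [NonUnitalNonAssocRing S] (X : Matrix m n S) (Y : Matrix n m S)
    (h : ∀ i j k l, X i j * Y k l = -(Y k l * X i j)) :
    (X * Y).trace = -(Y * X).trace := by
  simp only [Matrix.trace, Matrix.diag_apply, Matrix.mul_apply, h, Finset.sum_neg_distrib]
  rw [Finset.sum_comm]

section OddMatrices

open CliffordAlgebra (evenOdd)

variable {R M : Type*} [CommRing R] [AddCommGroup M] [Module R M]

theorem exteriorAlgebra_mem_center_of_mem_evenOdd_zero {x : ExteriorAlgebra R M}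
    (hx : x ∈ evenOdd (0 : QuadraticForm R M) 0) :
    x ∈ Subring.center (ExteriorAlgebra R M) := by
  rw [Subring.mem_center_iff]
  intro y
  induction y using DirectSum.Decomposition.inductionOn (evenOdd (0 : QuadraticForm R M)) with
  | zero => rw [zero_mul, mul_zero]
  | homogeneous y =>
    have h := CliffordAlgebra.commute_map_mul_map_of_isOrtho_of_mem_evenOdd_zero_left
      (.id (0 : QuadraticForm R M)) (.id (0 : QuadraticForm R M))
      (fun _ _ => by simp [QuadraticMap.isOrtho_def]) x y hx y.2
    simpa [CliffordAlgebra.map_id] using h.eq.symm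
  | add a b ha hb => rw [mul_add, add_mul, ha, hb]

theorem exteriorAlgebra_mul_eq_neg_of_mem_evenOdd_one {x y : ExteriorAlgebra R M}
    (hx : x ∈ evenOdd (0 : QuadraticForm R M) 1) (hy : y ∈ evenOdd (0 : QuadraticForm R M) 1) :
    x * y = -(y * x) := by
  have h := CliffordAlgebra.map_mul_map_eq_neg_of_isOrtho_of_mem_evenOdd_one
    (.id (0 : QuadraticForm R M)) (.id (0 : QuadraticForm R M))
    (fun _ _ => by simp [QuadraticMap.isOrtho_def]) x y hx hy
  simpa [CliffordAlgebra.map_id] using h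

variable {n : Type*} [Fintype n] [DecidableEq n] [IsAddTorsionFree (ExteriorAlgebra R M)]
  {X : Matrix n n (ExteriorAlgebra R M)}

theorem trace_pow_eq_zero_of_apply_mem_evenOdd_one
    (hX : ∀ i j, X i j ∈ evenOdd (0 : QuadraticForm R M) 1) {k : ℕ} (hk : Odd k) :
    (X ^ (k + 1)).trace = 0 := by
  have pow_odd (i j : n) : (X ^ k) i j ∈ evenOdd (0 : QuadraticForm R M) 1 := by
    simpa [(ZMod.natCast_eq_one_iff_odd).2 hk] using matrix_pow_apply_mem_graded _ hX k i j
  rw [← self_eq_neg]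
  calc (X ^ (k + 1)).trace = (X ^ k * X).trace := by rw [pow_succ]
    _ = -(X * X ^ k).trace := trace_mul_eq_neg_of_anticommute _ _ fun i j i' j' =>
      exteriorAlgebra_mul_eq_neg_of_mem_evenOdd_one (pow_odd i j) (hX i' j')
    _ = -(X ^ (k + 1)).trace := by rw [pow_succ']

theorem matrix_pow_two_mul_card_eq_zero_of_apply_mem_evenOdd_one
    (hX : ∀ i j, X i j ∈ evenOdd (0 : QuadraticForm R M) 1) : X ^ (2 * Fintype.card n) = 0 := by
  have sq_even (i j : n) : (X ^ 2) i j ∈ evenOdd (0 : QuadraticForm R M) 0 :=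
    matrix_pow_apply_mem_graded _ hX 2 i j
  rw [pow_mul]
  refine matrix_pow_card_eq_zero_of_apply_mem_center
    (fun i j => exteriorAlgebra_mem_center_of_mem_evenOdd_zero (sq_even i j)) fun k => ?_
  rw [← pow_mul, mul_add_one]
  exact trace_pow_eq_zero_of_apply_mem_evenOdd_one hX ⟨k, rfl⟩

end OddMatrices

section StandardPolynomial

/-- The value at `x₁, …, x_k` of the standard polynomial `s_k`, the alternating sum of the
products of the `xᵢ` in all orders. -/
def standardPolynomial {S : Type*} [Ring S] {k : ℕ} (x : Fin k → S) : S :=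
  ∑ π : Equiv.Perm (Fin k), (Equiv.Perm.sign π : ℤ) • (List.ofFn fun i => x (π i)).prod

theorem map_standardPolynomial {S T : Type*} [Ring S] [Ring T] (φ : S →+* T) {k : ℕ}
    (x : Fin k → S) : φ (standardPolynomial x) = standardPolynomial (φ ∘ x) := by
  simp only [standardPolynomial, map_sum, map_zsmul, map_list_prod, List.map_ofFn,
    Function.comp_def]

theorem sum_pow_eq_sum_list_prod {S ι : Type*} [Semiring S] [Fintype ι] (x : ι → S) (k : ℕ) :
    (∑ i, x i) ^ k = ∑ f : Fin k → ι, (List.ofFn fun i => x (f i)).prod := by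
  classical
  simpa [List.ofFn_const] using
    (MultilinearMap.mkPiAlgebraFin ℕ k S).map_sum fun _ => x

theorem list_prod_ofFn_matrix_map_smul {R E n : Type*} [CommSemiring R] [Semiring E] [Algebra R E]
    [Fintype n] [DecidableEq n] {k : ℕ} (A : Fin k → Matrix n n R) (v : Fin k → E) :
    (List.ofFn fun i => (A i).map (· • v i)).prod =
      (List.ofFn A).prod.map (· • (List.ofFn v).prod) := by
  induction k with
  | zero =>
    ext i j
    by_cases h : i = j <;> simp [h]
  | succ k ih =>
    simp only [List.ofFn_succ, List.prod_cons, ih]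
    ext i j
    simp only [Matrix.mul_apply, Matrix.map_apply, Finset.sum_smul, smul_mul_smul_comm]

variable {R n : Type*} [CommRing R] [Fintype n] [DecidableEq n]

theorem sum_matrix_map_smul_ι_pow {M : Type*} [AddCommGroup M] [Module R M] {k : ℕ}
    (A : Fin k → Matrix n n R) (v : Fin k → M) :
    (∑ i, (A i).map (· • ExteriorAlgebra.ι R (v i))) ^ k =
      (standardPolynomial A).map (· • ExteriorAlgebra.ιMulti R k v) := by
  have expand : (∑ i, (A i).map (· • ExteriorAlgebra.ι R (v i))) ^ k =
      ∑ f : Fin k → Fin k, (List.ofFn fun i => A (f i)).prod.map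
        (· • ExteriorAlgebra.ιMulti R k (v ∘ f)) := by
    rw [sum_pow_eq_sum_list_prod]
    exact Finset.sum_congr rfl fun f _ => list_prod_ofFn_matrix_map_smul _ _
  rw [expand]
  ext p q
  simp only [standardPolynomial, Matrix.map_apply, Matrix.sum_apply, Matrix.smul_apply,
    Finset.sum_smul]
  refine (Fintype.sum_of_injective (fun π : Equiv.Perm (Fin k) => (π : Fin k → Fin k))
    DFunLike.coe_injective _ _ (fun f hf => ?_) fun π => ?_).symm
  · rw [AlternatingMap.map_eq_zero_of_not_injective, smul_zero]
    exact fun hinj => hf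
      ⟨.ofBijective f (Finite.injective_iff_bijective.1 hinj.of_comp), rfl⟩
  · rw [AlternatingMap.map_perm, Units.smul_def, smul_comm, smul_assoc]

theorem smul_ιMulti_basis_injective {M : Type*} [AddCommGroup M] [Module R M] {k : ℕ}
    (b : Module.Basis (Fin k) R M) :
    Function.Injective fun r : R => r • ExteriorAlgebra.ιMulti R k b := by
  let detForm : ExteriorAlgebra R M →ₗ[R] R :=
    ExteriorAlgebra.liftAlternating (Function.update 0 k b.det)
  have detForm_basis : detForm (ExteriorAlgebra.ιMulti R k b) = 1 := by
    rw [ExteriorAlgebra.liftAlternating_apply_ιMulti, Function.update_self, b.det_self]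
  exact Function.LeftInverse.injective (g := detForm) fun r => by
    rw [map_smul, detForm_basis, smul_eq_mul, mul_one]

theorem standardPolynomial_matrix_eq_zero_of_algebra_rat [Algebra ℚ R] {k : ℕ}
    (hk : 2 * Fintype.card n ≤ k) (A : Fin k → Matrix n n R) : standardPolynomial A = 0 := by
  let b := Pi.basisFun R (Fin k)
  have : IsAddTorsionFree (ExteriorAlgebra R (Fin k → R)) := .of_module_rat _
  have pow_eq_zero : (∑ i, (A i).map (· • ExteriorAlgebra.ι R (b i))) ^ k = 0 := by
    refine pow_eq_zero_of_le hk
      (matrix_pow_two_mul_card_eq_zero_of_apply_mem_evenOdd_one fun i j => ?_)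
    rw [Matrix.sum_apply]
    exact sum_mem fun l _ => Submodule.smul_mem _ _ (CliffordAlgebra.ι_mem_evenOdd_one _ _)
  apply Matrix.map_injective (smul_ιMulti_basis_injective b)
  calc (standardPolynomial A).map (· • ExteriorAlgebra.ιMulti R k b)
    _ = 0 := by rw [← sum_matrix_map_smul_ι_pow, pow_eq_zero]
    _ = Matrix.map 0 (· • ExteriorAlgebra.ιMulti R k b) :=
      (Matrix.map_zero (· • ExteriorAlgebra.ιMulti R k b) (zero_smul R _)).symm

/-- The **Amitsur–Levitzki theorem**. -/
theorem standardPolynomial_matrix_eq_zero {k : ℕ} (hk : 2 * Fintype.card n ≤ k)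
    (A : Fin k → Matrix n n R) : standardPolynomial A = 0 := by
  let σ := Fin k × n × n
  let generic (i : Fin k) : Matrix n n (MvPolynomial σ ℤ) := .of fun p q => .X (i, p, q)
  let evalAtA : MvPolynomial σ ℤ →+* R :=
    (MvPolynomial.aeval fun x => A x.1 x.2.1 x.2.2).toRingHom
  let rationalize : MvPolynomial σ ℤ →+* MvPolynomial σ ℚ := MvPolynomial.map (Int.castRingHom ℚ)
  have rationalize_injective : Function.Injective (rationalize.mapMatrix (m := n)) :=
    Matrix.map_injective (MvPolynomial.map_injective _ Int.cast_injective)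
  have generic_eq_zero : standardPolynomial generic = 0 := by
    apply rationalize_injective
    rw [map_standardPolynomial, map_zero, standardPolynomial_matrix_eq_zero_of_algebra_rat hk]
  have evalAtA_generic : evalAtA.mapMatrix ∘ generic = A := by
    ext i p q
    simp [evalAtA, generic]
  rw [← evalAtA_generic, ← map_standardPolynomial, generic_eq_zero, map_zero]

end StandardPolynomial

section DegreeFiltration

open ExteriorAlgebra

variable {R M : Type*} [CommRing R] [AddCommGroup M] [Module R M]

theorem exteriorPower_eq_bot_of_card_lt {ι : Type*} [Fintype ι] (b : Module.Basis ι R M) {d : ℕ}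
    (hd : Fintype.card ι < d) : ⋀[R]^d M = ⊥ := by
  have ιMulti_eq_zero : ιMulti R d (M := M) = 0 :=
    b.ext_alternating fun v hv =>
      absurd (Fintype.card_le_of_injective v hv) (by rwa [Fintype.card_fin, not_le])
  rw [← ιMulti_span_fixedDegree, ιMulti_eq_zero, Submodule.span_eq_bot]
  rintro _ ⟨v, rfl⟩
  rfl

theorem iSup_exteriorPower_eq_iSup_Icc {ι : Type*} [Fintype ι] (b : Module.Basis ι R M) (r : ℕ) :
    ⨆ d ≥ r, ⋀[R]^d M = ⨆ d ∈ Finset.Icc r (Fintype.card ι), ⋀[R]^d M := by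
  refine le_antisymm (iSup₂_le fun d hd => ?_)
    (biSup_mono fun d hd => (Finset.mem_Icc.1 hd).1)
  rcases le_or_gt d (Fintype.card ι) with hle | hlt
  · exact le_iSup₂_of_le d (Finset.mem_Icc.2 ⟨hd, hle⟩) le_rfl
  · exact (exteriorPower_eq_bot_of_card_lt b hlt).le.trans bot_le

variable [Module Rᵐᵒᵖ M] [IsCentralScalar R M]

theorem toTrivSqZeroExt_eq_zero_of_mem_exteriorPower {d : ℕ} (hd : 2 ≤ d)
    {x : ExteriorAlgebra R M} (hx : x ∈ ⋀[R]^d M) : toTrivSqZeroExt x = 0 := by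
  obtain ⟨k, rfl⟩ := Nat.exists_eq_add_of_le' hd
  suffices ⋀[R]^(k + 2) M ≤ LinearMap.ker toTrivSqZeroExt.toLinearMap from this hx
  rw [← ιMulti_span_fixedDegree, Submodule.span_le]
  rintro _ ⟨v, rfl⟩
  simp [ιMulti_apply, ← mul_assoc]

theorem sub_toTrivSqZeroExt_mem_iSup_exteriorPower (x : ExteriorAlgebra R M) :
    x - (algebraMap R _ (toTrivSqZeroExt x).fst + ι R (toTrivSqZeroExt x).snd) ∈
      ⨆ d ≥ 2, ⋀[R]^d M := by
  induction x using DirectSum.Decomposition.inductionOn fun d : ℕ => ⋀[R]^d M with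
  | zero => simp
  | @homogeneous d x =>
    obtain ⟨x, hx⟩ := x
    match d with
    | 0 =>
      rw [exteriorPower, pow_zero] at hx
      obtain ⟨r, rfl⟩ := Submodule.mem_one.1 hx
      simp [TrivSqZeroExt.algebraMap_eq_inl]
    | 1 =>
      rw [exteriorPower, pow_one] at hx
      obtain ⟨v, rfl⟩ := hx
      simp
    | d + 2 =>
      have hd : 2 ≤ d + 2 := Nat.le_add_left 2 d
      simpa [toTrivSqZeroExt_eq_zero_of_mem_exteriorPower hd hx] using
        Submodule.mem_iSup_of_mem (d + 2) (Submodule.mem_iSup_of_mem hd hx)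
  | add x y hx hy =>
    convert add_mem hx hy using 1
    simp only [map_add, TrivSqZeroExt.fst_add, TrivSqZeroExt.snd_add]
    abel

theorem mem_iSup_exteriorPower_of_toTrivSqZeroExt_eq_zero {x : ExteriorAlgebra R M}
    (hx : toTrivSqZeroExt x = 0) : x ∈ ⨆ d ≥ 2, ⋀[R]^d M := by
  simpa [hx] using sub_toTrivSqZeroExt_mem_iSup_exteriorPower x

end DegreeFiltration

theorem grassmann_matrix_standard_polynomial_entries_degree_ge_two_general
    {R M n : Type*} [CommRing R] [AddCommGroup M] [Module R M] [Fintype n] [DecidableEq n] {k : ℕ}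
    (hk : 2 * Fintype.card n ≤ k) (A : Fin k → Matrix n n (ExteriorAlgebra R M)) (p q : n) :
    standardPolynomial A p q ∈ ⨆ d ≥ 2, ⋀[R]^d M := by
  let : Module Rᵐᵒᵖ M := Module.compHom _ ((RingHom.id R).fromOpposite mul_comm)
  have : IsCentralScalar R M := ⟨fun _ _ => rfl⟩
  let φ : ExteriorAlgebra R M →+* TrivSqZeroExt R M := ExteriorAlgebra.toTrivSqZeroExt.toRingHom
  have map_eq_zero : φ.mapMatrix (standardPolynomial A) = 0 := by
    rw [map_standardPolynomial, standardPolynomial_matrix_eq_zero hk]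
  exact mem_iSup_exteriorPower_of_toTrivSqZeroExt_eq_zero (congrFun₂ map_eq_zero p q)

/-- For matrices `A₁, …, A_{2n}` over the Grassmann algebra of rank `m`, every entry of
`s_{2n}(A₁, …, A_{2n})` lies in `E^m_{≥2} = ⨁_{i=2}^m E^m_i`, the sum of the homogeneous
components of degree at least `2`. -/
theorem grassmann_matrix_standard_polynomial_entries_degree_ge_two
    (R : Type*) [CommRing R] (m n : ℕ) (hn : 1 ≤ n)
    (A : Fin (2 * n) → Matrix (Fin n) (Fin n) (ExteriorAlgebra R (Fin m → R)))
    (p q : Fin n) :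
    (∑ π : Equiv.Perm (Fin (2 * n)),
        (Equiv.Perm.sign π : ℤ) • (List.ofFn fun i => A (π i)).prod) p q ∈
      ⨆ i ∈ Finset.Icc 2 m, (⋀[R]^i (Fin m → R)) := by
  have h := iSup_exteriorPower_eq_iSup_Icc (Pi.basisFun R (Fin m)) 2
  rw [Fintype.card_fin] at h
  exact h ▸ grassmann_matrix_standard_polynomial_entries_degree_ge_two_general (by simp) A p q
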